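/- There is a constant c (independent of the game) such that every coordination game without bonuses on a weighted open chain of m cycles, each cycle having n nodes, in which for every j ∈ {1,…,m−1} the two weights w_1^j (of the edge n^j → 1^j) and w_2^j (of the edge (k−1)^{j+1} → 1^j) entering the shared node 1^j are distinct, admits, from every joint strategy, a finite improvement path of length at most c·n·m³ (hence ending in a Nash equilibrium). -/

import Mathlib

open scoped Classical

namespace CG

/-- Payoff of node `i` in a coordination game on a weighted directed graph
with adjacency `adj` (an edge `j → i` is `adj j i`), edge weights `w`,
bonuses `β`, under the joint strategy `s`. -/
noncomputable def payoff {V M : Type} [Fintype V] (adj : V → V → Prop)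
    (w : V → V → ℝ) (β : V → M → ℕ) (s : V → M) (i : V) : ℝ :=
  (∑ j ∈ Finset.univ.filter (fun j => adj j i ∧ s j = s i), w j i) + (β i (s i) : ℝ)

/-- A joint strategy assigns to every node a colour from its colour set. -/
def Valid {V M : Type} (C : V → Finset M) (s : V → M) : Prop :=
  ∀ i, s i ∈ C i

/-- `s'` is a profitable deviation of the (non-empty) coalition
`K = {i | s i ≠ s' i}` from `s`. -/
def ProfDev {V M : Type} [Fintype V] (adj : V → V → Prop) (w : V → V → ℝ)
    (β : V → M → ℕ) (C : V → Finset M) (s s' : V → M) : Prop :=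
  Valid C s' ∧ s ≠ s' ∧
    ∀ i, s i ≠ s' i → payoff adj w β s i < payoff adj w β s' i

/-- A profitable deviation of a single player. -/
def UniDev {V M : Type} [Fintype V] (adj : V → V → Prop) (w : V → V → ℝ)
    (β : V → M → ℕ) (C : V → Finset M) (s s' : V → M) : Prop :=
  ProfDev adj w β C s s' ∧ ∃ i, ∀ j, j ≠ i → s j = s' j

/-- A Nash equilibrium: no single player has a profitable deviation. -/
def IsNash {V M : Type} [Fintype V] (adj : V → V → Prop) (w : V → V → ℝ)
    (β : V → M → ℕ) (C : V → Finset M) (s : V → M) : Prop :=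
  Valid C s ∧ ∀ s', ¬ UniDev adj w β C s s'

/-- A strong equilibrium: no coalition has a profitable deviation. -/
def IsStrong {V M : Type} [Fintype V] (adj : V → V → Prop) (w : V → V → ℝ)
    (β : V → M → ℕ) (C : V → Finset M) (s : V → M) : Prop :=
  Valid C s ∧ ∀ s', ¬ ProfDev adj w β C s s'

/-- There is a finite improvement path of length `L` starting at `s`
(each step a profitable single-player deviation) ending in a Nash equilibrium. -/
def ImpPath {V M : Type} [Fintype V] (adj : V → V → Prop) (w : V → V → ℝ)
    (β : V → M → ℕ) (C : V → Finset M) (s : V → M) (L : ℕ) : Prop :=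
  ∃ σ : ℕ → V → M, σ 0 = s ∧
    (∀ t, t < L → UniDev adj w β C (σ t) (σ (t + 1))) ∧
    IsNash adj w β C (σ L)

/-- There is a finite c-improvement path of length `L` starting at `s`
(each step a profitable coalition deviation) ending in a strong equilibrium. -/
def CImpPath {V M : Type} [Fintype V] (adj : V → V → Prop) (w : V → V → ℝ)
    (β : V → M → ℕ) (C : V → Finset M) (s : V → M) (L : ℕ) : Prop :=
  ∃ σ : ℕ → V → M, σ 0 = s ∧
    (∀ t, t < L → ProfDev adj w β C (σ t) (σ (t + 1))) ∧
    IsStrong adj w β C (σ L)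

/-- Adjacency of the simple cycle `1 → 2 → ⋯ → n → 1` on `Fin n`. -/
def cycAdj (n : ℕ) : Fin n → Fin n → Prop :=
  fun i j => (i.val + 1) % n = j.val

/-- Adjacency of a chain of `m` cycles, each of `n` nodes: `node j i` is the
`(i+1)`-st node of the `(j+1)`-st cycle (`0`-based indices). -/
def chainAdj {V : Type} (m n : ℕ) (node : ℕ → ℕ → V) : V → V → Prop :=
  fun u v => ∃ j i, j < m ∧ i < n ∧ u = node j i ∧ v = node j ((i + 1) % n)

/-- `node`, `k` describe an open chain of `m ≥ 2` simple cycles, each on `n ≥ 3`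
nodes, where consecutive cycles `C_j, C_{j+1}` share exactly the node
`node j 0 = node (j+1) (k j)` (with `1 ≤ k j < n`) and the cycles are
otherwise pairwise disjoint, and every vertex lies on some cycle. -/
def IsOpenChain {V : Type} (m n : ℕ) (node : ℕ → ℕ → V) (k : ℕ → ℕ) : Prop :=
  2 ≤ m ∧ 3 ≤ n ∧
  (∀ j, j + 1 < m → 1 ≤ k j ∧ k j < n) ∧
  (∀ j, j + 1 < m → node j 0 = node (j + 1) (k j)) ∧
  (∀ j i j' i', j < m → i < n → j' < m → i' < n → node j i = node j' i' →
      (j = j' ∧ i = i') ∨ (j' = j + 1 ∧ i = 0 ∧ i' = k j) ∨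
      (j = j' + 1 ∧ i' = 0 ∧ i = k j')) ∧
  (∀ v : V, ∃ j i, j < m ∧ i < n ∧ node j i = v)

/-- As `IsOpenChain`, but additionally the last cycle shares exactly the node
`node (m-1) 0 = node 0 (k (m-1))` with the first one. -/
def IsClosedChain {V : Type} (m n : ℕ) (node : ℕ → ℕ → V) (k : ℕ → ℕ) : Prop :=
  2 ≤ m ∧ 3 ≤ n ∧
  (∀ j, j < m → 1 ≤ k j ∧ k j < n) ∧
  (∀ j, j + 1 < m → node j 0 = node (j + 1) (k j)) ∧
  node (m - 1) 0 = node 0 (k (m - 1)) ∧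
  (∀ j i j' i', j < m → i < n → j' < m → i' < n → node j i = node j' i' →
      (j = j' ∧ i = i') ∨ (j' = j + 1 ∧ i = 0 ∧ i' = k j) ∨
      (j = j' + 1 ∧ i' = 0 ∧ i = k j') ∨
      (j = m - 1 ∧ j' = 0 ∧ i = 0 ∧ i' = k (m - 1)) ∨
      (j' = m - 1 ∧ j = 0 ∧ i' = 0 ∧ i = k (m - 1))) ∧
  (∀ v : V, ∃ j i, j < m ∧ i < n ∧ node j i = v)

/-- Membership in the union of the cycles `0..j`. -/
def Dm {V : Type} (n : ℕ) (node : ℕ → ℕ → V) (j : ℕ) (u : V) : Prop :=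
  ∃ j' i, j' ≤ j ∧ i < n ∧ u = node j' i

/-- Abstract combinatorial description of the dynamics. -/
structure Sys {V M : Type} (m n : ℕ) (node : ℕ → ℕ → V) (k : ℕ → ℕ)
    (Val : (V → M) → Prop) (Stab : (V → M) → V → Prop)
    (Reach : ℕ → (V → M) → (V → M) → Prop) (X : ℕ → (V → M) → M)
    (F : ℕ → M → M → M → Prop) : Prop where
  chain : IsOpenChain m n node k
  refl : ∀ s, Reach 0 s s
  trans : ∀ a b s s' s'', Reach a s s' → Reach b s' s'' → Reach (a + b) s s''
  mono : ∀ a b s s', a ≤ b → Reach a s s' → Reach b s s'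
  val : ∀ a s s', Val s → Reach a s s' → Val s'
  single : ∀ s u, Val s → ∃ s', Reach 1 s s' ∧ (∀ x, x ≠ u → s' x = s x) ∧ Stab s' u ∧
    (Stab s u → s' = s)
  reg : ∀ j i, j < m → 0 < i → i < n → (∀ j', j = j' + 1 → i ≠ k j') → ∃ A : Set M, ∀ s,
    Stab s (node j i) ↔ (s (node j (i - 1)) ∈ A → s (node j i) = s (node j (i - 1)))
  sh : ∀ j s, j < m → (Stab s (node j 0) ↔ F j (s (node j (n - 1))) (X j s) (s (node j 0)))
  Xe : ∀ j s, j + 1 < m → X j s = s (node (j + 1) (k j - 1))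
  Xl : ∀ j s s', j + 1 = m → X j s = X j s'
  f1 : ∀ j p x c, j < m → F j p x c → F j p c c
  f2 : ∀ j p x c, j < m → F j p x c → F j c x c
  f3 : ∀ j p x x0 c0 t1 y t2, j < m → ¬ F j p x c0 → F j p x0 c0 → F j p x t1 → ¬ F j y x t1 →
    F j y x t2 → t2 = y
  f4 : ∀ j p x t0 y t1 y' t2, j < m → F j p x t0 → ¬ F j y x t0 → F j y x t1 → t1 ≠ y →
    ¬ F j y' x t1 → F j y' x t2 → t2 = y'

namespace Sys

variable {V M : Type} {m n : ℕ} {node : ℕ → ℕ → V} {k : ℕ → ℕ}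
    {Val : (V → M) → Prop} {Stab : (V → M) → V → Prop}
    {Reach : ℕ → (V → M) → (V → M) → Prop} {X : ℕ → (V → M) → M}
    {F : ℕ → M → M → M → Prop}

theorem inj (S : Sys m n node k Val Stab Reach X F) {j i i' : ℕ} (hj : j < m) (hi : i < n)
    (hi' : i' < n) (h : node j i = node j i') : i = i' := by
  obtain ⟨_, _, _, _, h5, _⟩ := S.chain
  rcases h5 j i j i' hj hi hj hi' h with h | h | h <;> omega

theorem n3 (S : Sys m n node k Val Stab Reach X F) : 3 ≤ n := S.chain.2.1

theorem kk (S : Sys m n node k Val Stab Reach X F) {j : ℕ} (hj : j + 1 < m) :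
    1 ≤ k j ∧ k j < n := S.chain.2.2.1 j hj

theorem glue (S : Sys m n node k Val Stab Reach X F) {j : ℕ} (hj : j + 1 < m) :
    node j 0 = node (j + 1) (k j) := S.chain.2.2.2.1 j hj

theorem notD (S : Sys m n node k Val Stab Reach X F) {j i : ℕ} (hj : j + 1 < m) (hi : i < n)
    (hk : i ≠ k j) : ¬ Dm n node j (node (j + 1) i) := by
  rintro ⟨j', i', h1, h2, h3⟩
  obtain ⟨_, _, _, _, h5, _⟩ := S.chain
  rcases h5 (j + 1) i j' i' hj hi (by omega) h2 h3 with h | h | h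
  · omega
  · omega
  · obtain ⟨ha, hb, hc⟩ := h
    have : j = j' := by omega
    subst this
    exact hk hc

theorem cover (S : Sys m n node k Val Stab Reach X F) {j : ℕ} {u : V} (hj : j + 1 < m)
    (h : Dm n node (j + 1) u) :
    Dm n node j u ∨ ∃ i, i < n ∧ i ≠ k j ∧ u = node (j + 1) i := by
  obtain ⟨j', i, h1, h2, h3⟩ := h
  have := S.n3
  by_cases hj' : j' ≤ j
  · exact Or.inl ⟨j', i, hj', h2, h3⟩
  · have : j' = j + 1 := by omega
    subst this
    by_cases hk : i = k j
    · subst hk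
      exact Or.inl ⟨j, 0, le_rfl, by omega, by rw [h3, S.glue hj]⟩
    · exact Or.inr ⟨i, h2, hk, h3⟩

theorem Xloc (S : Sys m n node k Val Stab Reach X F) {j : ℕ} {s s' : V → M} (hj : j < m)
    (h : ∀ u, ¬ Dm n node j u → s' u = s u) : X j s' = X j s := by
  by_cases hj' : j + 1 < m
  · rw [S.Xe j s hj', S.Xe j s' hj']
    have := S.kk hj'
    exact h _ (S.notD hj' (by omega) (by omega))
  · exact S.Xl j _ _ (by omega)

theorem loc (S : Sys m n node k Val Stab Reach X F) {s s' : V → M} : ∀ {j : ℕ}, j < m →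
    (∀ u, Dm n node j u → s' u = s u) → ∀ u, Dm n node j u → u ≠ node j 0 →
    Stab s u → Stab s' u := by
  have n3 := S.n3
  intro j
  induction j with
  | zero =>
    rintro hj h u ⟨j', i, h1, h2, rfl⟩ hu hs
    have : j' = 0 := by omega
    subst this
    have hi : 0 < i := by
      rcases Nat.eq_zero_or_pos i with h0 | h0
      · subst h0; exact absurd rfl hu
      · exact h0
    obtain ⟨A, hA⟩ := S.reg 0 i hj hi h2 (by intros; omega)
    rw [hA] at hs ⊢
    rw [h _ ⟨0, i, le_rfl, h2, rfl⟩, h _ ⟨0, i - 1, le_rfl, by omega, rfl⟩]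
    exact hs
  | succ j ih =>
    intro hj h u hu hne hs
    have hk := S.kk hj
    have hsub : ∀ u, Dm n node j u → s' u = s u := by
      rintro u ⟨j', i, h1, h2, h3⟩
      exact h u ⟨j', i, by omega, h2, h3⟩
    rcases S.cover hj hu with hu' | ⟨i, hi, hik, rfl⟩
    · by_cases hv : u = node j 0
      · subst hv
        rw [S.sh j _ (by omega)] at hs ⊢
        rw [S.Xe _ _ hj] at hs ⊢
        rw [hsub _ ⟨j, n - 1, le_rfl, by omega, rfl⟩, hsub _ ⟨j, 0, le_rfl, by omega, rfl⟩,
          h _ ⟨j + 1, k j - 1, le_rfl, by omega, rfl⟩]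
        exact hs
      · exact ih (by omega) hsub u hu' hv hs
    · have hi0 : 0 < i := by
        rcases Nat.eq_zero_or_pos i with h0 | h0
        · subst h0; exact absurd rfl hne
        · exact h0
      obtain ⟨A, hA⟩ := S.reg (j + 1) i hj hi0 hi (by
        intro j' hj'
        have : j = j' := by omega
        subst this
        exact hik)
      rw [hA] at hs ⊢
      rw [h _ ⟨j + 1, i, le_rfl, hi, rfl⟩, h _ ⟨j + 1, i - 1, le_rfl, by omega, rfl⟩]
      exact hs

theorem seg (S : Sys m n node k Val Stab Reach X F) {j : ℕ} (hj : j < m) (p : ℕ) (s : V → M)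
    (hs : Val s) : ∀ d, p + d < n → (∀ j', j = j' + 1 → ∀ i, p < i → i ≤ p + d → i ≠ k j') →
    ∃ s', Reach d s s' ∧
      (∀ x, (∀ i, p < i → i ≤ p + d → x ≠ node j i) → s' x = s x) ∧
      (∀ i, p < i → i ≤ p + d → Stab s' (node j i)) ∧
      ((∀ i, p + 1 < i → i ≤ p + d → Stab s (node j i)) →
        (0 < d ∧ s' (node j (p + d)) = s (node j (p + d))) ∨
          s' (node j (p + d)) = s (node j p)) := by
  intro d
  induction d with
  | zero =>
    intro h1 h2
    exact ⟨s, S.refl s, fun _ _ => rfl, fun i h3 h4 => by omega, fun _ => Or.inr rfl⟩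
  | succ d ih =>
    intro h1 h2
    obtain ⟨s1, r1, o1, t1, e1⟩ := ih (by omega) (fun j' hj' i h3 h4 => h2 j' hj' i h3 (by omega))
    obtain ⟨s2, r2, o2, t2, e2⟩ := S.single s1 (node j (p + (d + 1))) (S.val _ _ _ hs r1)
    obtain ⟨A, hA⟩ := S.reg j (p + (d + 1)) hj (by omega) h1
      (fun j' hj' => h2 j' hj' _ (by omega) (by omega))
    have hpred : p + (d + 1) - 1 = p + d := by omega
    rw [hpred] at hA
    have ho : ∀ i, i ≤ p + d → s2 (node j i) = s1 (node j i) := by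
      intro i hi
      apply o2
      intro h
      have := S.inj hj (by omega) h1 h
      omega
    refine ⟨s2, S.trans _ _ _ _ _ r1 r2, ?_, ?_, ?_⟩
    · intro x hx
      rw [o2 x (hx _ (by omega) le_rfl), o1 x (fun i h3 h4 => hx i h3 (by omega))]
    · intro i h3 h4
      by_cases hi : i = p + (d + 1)
      · rw [hi]; exact t2
      · have := t1 i h3 (by omega)
        obtain ⟨A', hA'⟩ := S.reg j i hj (by omega) (by omega)
          (fun j' hj' => h2 j' hj' i h3 (by omega))
        rw [hA'] at this ⊢
        rw [ho i (by omega), ho (i - 1) (by omega)]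
        exact this
    · intro hst
      have hlast : s1 (node j (p + (d + 1))) = s (node j (p + (d + 1))) := by
        apply o1
        intro i h3 h4 h
        have := S.inj hj h1 (by omega) h
        omega
      by_cases hstab : Stab s1 (node j (p + (d + 1)))
      · left
        rw [e2 hstab, hlast]
        exact ⟨by omega, rfl⟩
      · right
        have hn := hstab
        rw [hA] at hn t2
        rw [ho _ le_rfl] at t2
        push Not at hn
        have h5 := t2 hn.1
        rw [h5]
        rcases e1 (fun i h3 h4 => hst i h3 (by omega)) with ⟨hd, h6⟩ | h6
        · exfalso
          apply hstab
          have := hst (p + (d + 1)) (by omega) le_rfl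
          rw [hA] at this ⊢
          rw [hlast, h6]
          exact this
        · exact h6

/-- Everything except the node `node j 0` is stable. -/
def Al (n : ℕ) (node : ℕ → ℕ → V) (Stab : (V → M) → V → Prop) (j : ℕ) (s : V → M) : Prop :=
  ∀ u, Dm n node j u → u ≠ node j 0 → Stab s u

theorem base (S : Sys m n node k Val Stab Reach X F) (hm : 0 < m) (s : V → M) (hs : Val s)
    (ha : Al n node Stab 0 s) :
    ∃ s', Reach n s s' ∧ (∀ u, ¬ Dm n node 0 u → s' u = s u) ∧
      (∀ u, Dm n node 0 u → Stab s' u) := by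
  have n3 := S.n3
  obtain ⟨s1, r1, o1, t1, e1⟩ := S.single s (node 0 0) hs
  have ne : ∀ i, 0 < i → i < n → node 0 i ≠ node 0 0 := by
    intro i h1 h2 h
    have := S.inj hm h2 (by omega) h
    omega
  obtain ⟨s2, r2, o2, t2, e2⟩ := S.seg hm 0 s1 (S.val _ _ _ hs r1) (n - 1) (by omega)
    (by intros; omega)
  simp only [Nat.zero_add] at *
  have off : ∀ u, ¬ Dm n node 0 u → s2 u = s u := by
    intro u hu
    rw [o2, o1]
    · rintro rfl; exact hu ⟨0, 0, le_rfl, by omega, rfl⟩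
    · rintro i h1 h2 rfl; exact hu ⟨0, i, le_rfl, by omega, rfl⟩
  have hv : s2 (node 0 0) = s1 (node 0 0) := by
    apply o2
    intro i h1 h2 h
    exact ne i h1 (by omega) h.symm
  have hst : ∀ i, 1 < i → i ≤ n - 1 → Stab s1 (node 0 i) := by
    intro i h1 h2
    have h3 := ha (node 0 i) ⟨0, i, le_rfl, by omega, rfl⟩ (ne i (by omega) (by omega))
    obtain ⟨A, hA⟩ := S.reg 0 i hm (by omega) (by omega) (by intros; omega)
    rw [hA] at h3 ⊢
    rw [o1 _ (ne i (by omega) (by omega)), o1 _ (ne (i - 1) (by omega) (by omega))]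
    exact h3
  have hX : X 0 s2 = X 0 s1 := by
    apply S.Xloc hm
    intro u hu
    apply o2
    rintro i h1 h2 rfl; exact hu ⟨0, i, le_rfl, by omega, rfl⟩
  refine ⟨s2, S.mono _ _ _ _ (by omega) (S.trans _ _ _ _ _ r1 r2), off, ?_⟩
  rintro u ⟨j', i, h1, h2, rfl⟩
  have : j' = 0 := by omega
  subst this
  rcases Nat.eq_zero_or_pos i with h0 | h0
  · subst h0
    rw [S.sh 0 _ hm] at t1 ⊢
    rw [hX, hv]
    rcases e2 hst with ⟨_, h⟩ | h
    · rw [h]; exact t1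
    · rw [h]; exact S.f2 _ _ _ _ hm t1
  · exact t2 i h0 (by omega)

/-- Facts about a segment of the cycle `j+1`, between `node (j+1) 0` and the gluing node. -/
theorem seg1 (S : Sys m n node k Val Stab Reach X F) {j : ℕ} (hj : j + 1 < m) (s : V → M)
    (hs : Val s) : ∃ s', Reach (k j - 1) s s' ∧
      (∀ x, (∀ i, 0 < i → i < k j → x ≠ node (j + 1) i) → s' x = s x) ∧
      (∀ i, 0 < i → i < k j → Stab s' (node (j + 1) i)) ∧
      ((∀ i, 1 < i → i < k j → Stab s (node (j + 1) i)) →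
        (0 < k j - 1 ∧ s' (node (j + 1) (k j - 1)) = s (node (j + 1) (k j - 1))) ∨
          s' (node (j + 1) (k j - 1)) = s (node (j + 1) 0)) := by
  have hk := S.kk hj
  obtain ⟨s', r, o, t, e⟩ := S.seg hj 0 s hs (k j - 1) (by omega) (by
    intro j' hj' i h1 h2
    have : j = j' := by omega
    subst this
    omega)
  simp only [Nat.zero_add] at *
  refine ⟨s', r, ?_, ?_, ?_⟩
  · intro x hx; exact o x (fun i h1 h2 => hx i h1 (by omega))
  · intro i h1 h2; exact t i h1 (by omega)
  · intro h; exact e (fun i h1 h2 => h i h1 (by omega))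

theorem seg2 (S : Sys m n node k Val Stab Reach X F) {j : ℕ} (hj : j + 1 < m) (s : V → M)
    (hs : Val s) : ∃ s', Reach (n - 1 - k j) s s' ∧
      (∀ x, (∀ i, k j < i → i < n → x ≠ node (j + 1) i) → s' x = s x) ∧
      (∀ i, k j < i → i < n → Stab s' (node (j + 1) i)) ∧
      ((∀ i, k j + 1 < i → i < n → Stab s (node (j + 1) i)) →
        (k j < n - 1 ∧ s' (node (j + 1) (n - 1)) = s (node (j + 1) (n - 1))) ∨
          s' (node (j + 1) (n - 1)) = s (node j 0)) := by
  have hk := S.kk hj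
  obtain ⟨s', r, o, t, e⟩ := S.seg hj (k j) s hs (n - 1 - k j) (by omega) (by
    intro j' hj' i h1 h2
    have : j = j' := by omega
    subst this
    omega)
  have h0 : k j + (n - 1 - k j) = n - 1 := by omega
  rw [h0] at o t e
  refine ⟨s', r, ?_, ?_, ?_⟩
  · intro x hx; exact o x (fun i h1 h2 => hx i h1 (by omega))
  · intro i h1 h2; exact t i h1 (by omega)
  · intro h
    rw [S.glue hj]
    rcases e (fun i h1 h2 => h i h1 (by omega)) with h | h
    · exact Or.inl ⟨by omega, h.2⟩
    · exact Or.inr h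

theorem regloc (S : Sys m n node k Val Stab Reach X F) {j i : ℕ} (hj : j + 1 < m) (h0 : 0 < i)
    (hi : i < n) (hk : i ≠ k j) {s s' : V → M} (h1 : s' (node (j + 1) i) = s (node (j + 1) i))
    (h2 : s' (node (j + 1) (i - 1)) = s (node (j + 1) (i - 1)))
    (h : Stab s (node (j + 1) i)) : Stab s' (node (j + 1) i) := by
  obtain ⟨A, hA⟩ := S.reg (j + 1) i hj h0 hi (by
    intro j' hj'
    have : j = j' := by omega
    subst this
    exact hk)
  rw [hA] at h ⊢
  rw [h1, h2]
  exact h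

theorem Dsucc {j : ℕ} {u : V} (h : Dm n node j u) : Dm n node (j + 1) u := by
  obtain ⟨j', i, h1, h2, h3⟩ := h
  exact ⟨j', i, by omega, h2, h3⟩

theorem Da (S : Sys m n node k Val Stab Reach X F) (j i : ℕ) (hi : i < n) :
    Dm n node j (node j i) := ⟨j, i, le_rfl, hi, rfl⟩

/-- Restabilisation property. -/
def RR (n : ℕ) (node : ℕ → ℕ → V) (Val : (V → M) → Prop) (Stab : (V → M) → V → Prop)
    (Reach : ℕ → (V → M) → (V → M) → Prop) (F : ℕ → M → M → M → Prop) (j B : ℕ) : Prop :=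
  ∀ s, Val s → Al n node Stab j s → (∃ x0, F j (s (node j (n - 1))) x0 (s (node j 0))) →
    ∃ s', Reach B s s' ∧ (∀ u, ¬ Dm n node j u → s' u = s u) ∧ (∀ u, Dm n node j u → Stab s' u)

theorem half' (S : Sys m n node k Val Stab Reach X F) {j B : ℕ} (hj : j + 1 < m)
    (hR : RR n node Val Stab Reach F j B) (s : V → M) (hs : Val s) (h1 : Al n node Stab j s)
    (hx : ∃ x0, F j (s (node j (n - 1))) x0 (s (node j 0)))
    (h2 : ∀ i, 0 < i → i < n → i ≠ k j → Stab s (node (j + 1) i)) :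
    ∃ s', Reach (B + n) s s' ∧ (∀ u, ¬ Dm n node (j + 1) u → s' u = s u) ∧
      s' (node (j + 1) 0) = s (node (j + 1) 0) ∧ Al n node Stab (j + 1) s' ∧
      (s' (node (j + 1) (n - 1)) = s (node (j + 1) (n - 1)) ∨
        s' (node (j + 1) (n - 1)) = s' (node j 0)) := by
  have n3 := S.n3
  have hk := S.kk hj
  obtain ⟨s3, r3, o3, t3⟩ := hR s hs h1 hx
  obtain ⟨s4, r4, o4, t4, e4⟩ := S.seg2 hj s3 (S.val _ _ _ hs r3)
  have c3 : ∀ i, i < n → i ≠ k j → s3 (node (j + 1) i) = s (node (j + 1) i) :=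
    fun i hi hik => o3 _ (S.notD hj hi hik)
  have c4 : ∀ u, Dm n node j u → s4 u = s3 u := by
    intro u hu
    apply o4
    rintro i h3 h4 rfl
    exact S.notD hj h4 (by omega) hu
  have c4' : ∀ i, i ≤ k j → s4 (node (j + 1) i) = s3 (node (j + 1) i) := by
    intro i hi
    apply o4
    intro i' h3 h4 h
    have := S.inj hj (by omega) h4 h
    omega
  have e := e4 (fun i h3 h4 => S.regloc hj (by omega) h4 (by omega) (c3 i h4 (by omega))
    (c3 (i - 1) (by omega) (by omega)) (h2 i (by omega) h4 (by omega)))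
  refine ⟨s4, S.mono _ _ _ _ (by omega) (S.trans _ _ _ _ _ r3 r4), ?_, ?_, ?_, ?_⟩
  · intro u hu
    rw [o4, o3]
    · exact fun h => hu (Dsucc h)
    · rintro i h3 h4 rfl
      exact hu (S.Da _ _ h4)
  · rw [c4' 0 (by omega), c3 0 (by omega) (by omega)]
  · intro u hu hne
    rcases S.cover hj hu with hu' | ⟨i, hi, hik, rfl⟩
    · by_cases hv : u = node j 0
      · subst hv
        have := t3 _ hu'
        rw [S.sh j _ (by omega), S.Xe _ _ hj] at this ⊢
        rw [c4 _ hu', c4 _ (S.Da j (n - 1) (by omega)), c4' _ (by omega)]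
        exact this
      · exact S.loc (by omega) c4 u hu' hv (t3 u hu')
    · have hi0 : 0 < i := by
        rcases Nat.eq_zero_or_pos i with h0 | h0
        · subst h0; exact absurd rfl hne
        · exact h0
      by_cases hlt : k j < i
      · exact t4 i hlt hi
      · refine S.regloc hj hi0 hi hik ?_ ?_ (h2 i hi0 hi hik)
        · rw [c4' _ (by omega), c3 _ hi hik]
        · rw [c4' _ (by omega), c3 _ (by omega) (by omega)]
  · rcases e with ⟨h3, h4⟩ | h4
    · left; rw [h4, c3 _ (by omega) (by omega)]
    · right; rw [h4, c4 _ (S.Da j 0 (by omega))]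

theorem half (S : Sys m n node k Val Stab Reach X F) {j B : ℕ} (hj : j + 1 < m)
    (hR : RR n node Val Stab Reach F j B) (s s1 : V → M) (hs : Val s1)
    (h1 : Al n node Stab (j + 1) s) (h2 : ∀ x, x ≠ node (j + 1) 0 → s1 x = s x) :
    ∃ s', Reach (B + 2 * n) s1 s' ∧ (∀ u, ¬ Dm n node (j + 1) u → s' u = s1 u) ∧
      s' (node (j + 1) 0) = s1 (node (j + 1) 0) ∧ Al n node Stab (j + 1) s' ∧
      (s' (node (j + 1) (n - 1)) = s (node (j + 1) (n - 1)) ∨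
        s' (node (j + 1) (n - 1)) = s' (node j 0)) := by
  have n3 := S.n3
  have hk := S.kk hj
  obtain ⟨s2, r2, o2, t2, e2⟩ := S.seg1 hj s1 hs
  have c2 : ∀ i, k j ≤ i → i < n → s2 (node (j + 1) i) = s (node (j + 1) i) := by
    intro i hi hi'
    rw [o2, h2]
    · intro h
      have := S.inj hj hi' (by omega) h
      omega
    · intro i' h3 h4 h
      have := S.inj hj hi' (by omega) h
      omega
  have c2' : ∀ u, Dm n node j u → s2 u = s u := by
    intro u hu
    rw [o2, h2]
    · rintro rfl
      exact S.notD hj (by omega) (by omega) hu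
    · rintro i h3 h4 rfl
      exact S.notD hj (by omega) (by omega) hu
  have nv : ∀ u, Dm n node j u → u ≠ node (j + 1) 0 := by
    rintro u hu rfl
    exact S.notD hj (by omega) (by omega) hu
  have hal : Al n node Stab j s2 := by
    intro u hu hne
    exact S.loc (by omega) c2' u hu hne (h1 u (Dsucc hu) (nv u hu))
  have hx : F j (s2 (node j (n - 1))) (X j s) (s2 (node j 0)) := by
    have d0 := S.Da j 0 (by omega)
    have := h1 _ (Dsucc d0) (nv _ d0)
    rw [S.sh j _ (by omega)] at this
    rw [c2' _ d0, c2' _ (S.Da j (n - 1) (by omega))]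
    exact this
  obtain ⟨s', r', o', v', a', e'⟩ := S.half' hj hR s2 (S.val _ _ _ hs r2) hal ⟨_, hx⟩ (by
    intro i hi0 hi hik
    by_cases hlt : i < k j
    · exact t2 i hi0 hlt
    · refine S.regloc hj hi0 hi hik (c2 i (by omega) hi) (c2 (i - 1) (by omega) (by omega))
        (h1 _ (S.Da _ _ hi) ?_)
      intro h
      have := S.inj hj hi (by omega) h
      omega)
  refine ⟨s', S.mono _ _ _ _ (by omega) (S.trans _ _ _ _ _ r2 r'), ?_, ?_, a', ?_⟩
  · intro u hu
    rw [o' u hu, o2]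
    rintro i h3 h4 rfl
    exact hu (S.Da _ _ (by omega))
  · rw [v', o2]
    intro i h3 h4 h
    have := S.inj hj (by omega) (by omega) h
    omega
  · rw [c2 _ (by omega) (by omega)] at e'
    exact e'

theorem last (S : Sys m n node k Val Stab Reach X F) {j : ℕ} (hj : j + 1 < m)
    (s s1 : V → M) (hs : Val s1)
    (h1 : Al n node Stab (j + 1) s) (h2 : ∀ x, x ≠ node (j + 1) 0 → s1 x = s x)
    (h3 : Stab s1 (node (j + 1) 0)) (h4 : s1 (node (j + 1) 0) = s (node j 0)) :
    ∃ s', Reach n s1 s' ∧ (∀ u, ¬ Dm n node (j + 1) u → s' u = s1 u) ∧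
      (∀ u, Dm n node (j + 1) u → Stab s' u) := by
  have n3 := S.n3
  have hk := S.kk hj
  obtain ⟨s2, r2, o2, t2, e2⟩ := S.seg1 hj s1 hs
  have c2 : ∀ i, k j ≤ i → i < n → s2 (node (j + 1) i) = s (node (j + 1) i) := by
    intro i hi hi'
    rw [o2, h2]
    · intro h
      have := S.inj hj hi' (by omega) h
      omega
    · intro i' h3 h4 h
      have := S.inj hj hi' (by omega) h
      omega
  have c1 : ∀ i, 0 < i → i < n → s1 (node (j + 1) i) = s (node (j + 1) i) := by
    intro i hi hi'
    rw [h2]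
    intro h
    have := S.inj hj hi' (by omega) h
    omega
  have c2' : ∀ u, Dm n node j u → s2 u = s u := by
    intro u hu
    rw [o2, h2]
    · rintro rfl
      exact S.notD hj (by omega) (by omega) hu
    · rintro i h3 h4 rfl
      exact S.notD hj (by omega) (by omega) hu
  have nv : ∀ u, Dm n node j u → u ≠ node (j + 1) 0 := by
    rintro u hu rfl
    exact S.notD hj (by omega) (by omega) hu
  have nv' : ∀ i, 0 < i → i < n → node (j + 1) i ≠ node (j + 1) 0 := by
    intro i hi hi' h
    have := S.inj hj hi' (by omega) h
    omega
  have v2 : s2 (node (j + 1) 0) = s1 (node (j + 1) 0) := by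
    apply o2
    intro i h3 h4 h
    have := S.inj hj (by omega) (by omega) h
    omega
  have off : ∀ u, ¬ Dm n node (j + 1) u → s2 u = s1 u := by
    intro u hu
    rw [o2]
    rintro i h3 h4 rfl
    exact hu (S.Da _ _ (by omega))
  have e := e2 (fun i h5 h6 => S.regloc hj (by omega) (by omega) (by omega)
    (c1 i (by omega) (by omega)) (c1 (i - 1) (by omega) (by omega))
    (h1 _ (S.Da _ _ (by omega)) (nv' i (by omega) (by omega))))
  refine ⟨s2, S.mono _ _ _ _ (by omega) r2, off, ?_⟩
  intro u hu
  rcases S.cover hj hu with hu' | ⟨i, hi, hik, rfl⟩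
  · by_cases hv : u = node j 0
    · subst hv
      have := h1 _ hu (nv _ hu')
      rw [S.sh j _ (by omega), S.Xe _ _ hj] at this ⊢
      rw [c2' _ hu', c2' _ (S.Da j (n - 1) (by omega))]
      rcases e with ⟨h5, h6⟩ | h6
      · rw [h6, c1 _ (by omega) (by omega)]
        exact this
      · rw [h6, h4]
        exact S.f1 _ _ _ _ (by omega) this
    · exact S.loc (by omega) c2' u hu' hv (h1 u hu (nv u hu'))
  · rcases Nat.eq_zero_or_pos i with h0 | h0
    · subst h0
      rw [S.sh _ _ hj] at h3 ⊢
      rw [v2, S.Xloc hj off, c2 _ (by omega) (by omega), ← c1 _ (by omega) (by omega)]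
      exact h3
    · by_cases hlt : i < k j
      · exact t2 i h0 hlt
      · exact S.regloc hj h0 hi hik (c2 i (by omega) hi) (c2 (i - 1) (by omega) (by omega))
          (h1 _ hu (nv' i h0 hi))

theorem full (S : Sys m n node k Val Stab Reach X F) {j : ℕ} {s : V → M}
    (h1 : Al n node Stab j s) (h2 : Stab s (node j 0)) : ∀ u, Dm n node j u → Stab s u := by
  intro u hu
  by_cases h : u = node j 0
  · rw [h]; exact h2
  · exact h1 u hu h

theorem Rsucc (S : Sys m n node k Val Stab Reach X F) {j B : ℕ} (hj : j + 1 < m)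
    (hR : RR n node Val Stab Reach F j B) : RR n node Val Stab Reach F (j + 1) (B + 4 * n) := by
  intro s hs ha hx
  have n3 := S.n3
  have hk := S.kk hj
  obtain ⟨x0, hx⟩ := hx
  by_cases h0 : Stab s (node (j + 1) 0)
  · exact ⟨s, S.mono _ _ _ _ (by omega) (S.refl s), fun _ _ => rfl, S.full ha h0⟩
  obtain ⟨s1, r1, o1, t1, _⟩ := S.single s (node (j + 1) 0) hs
  have hs1 := S.val _ _ _ hs r1
  obtain ⟨s4, r4, o4, v4, a4, e4⟩ := S.half hj hR s s1 hs1 ha o1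
  have hs4 := S.val _ _ _ hs1 r4
  have r14 := S.trans _ _ _ _ _ r1 r4
  have off1 : ∀ u, ¬ Dm n node (j + 1) u → s1 u = s u := by
    intro u hu
    apply o1
    rintro rfl
    exact hu (S.Da _ _ (by omega))
  have off4 : ∀ u, ¬ Dm n node (j + 1) u → s4 u = s u := by
    intro u hu
    rw [o4 u hu, off1 u hu]
  have x1 := S.Xloc hj off1
  have x4 := S.Xloc hj off4
  have p1 : s1 (node (j + 1) (n - 1)) = s (node (j + 1) (n - 1)) := by
    apply o1
    intro h
    have := S.inj hj (by omega) (by omega) h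
    omega
  by_cases h5 : Stab s4 (node (j + 1) 0)
  · exact ⟨s4, S.mono _ _ _ _ (by omega) r14, off4, S.full a4 h5⟩
  obtain ⟨s5, r5, o5, t5, _⟩ := S.single s4 (node (j + 1) 0) hs4
  have hs5 := S.val _ _ _ hs4 r5
  have off5 : ∀ u, ¬ Dm n node (j + 1) u → s5 u = s u := by
    intro u hu
    rw [o5, off4 u hu]
    rintro rfl
    exact hu (S.Da _ _ (by omega))
  have x5 := S.Xloc hj off5
  have p5 : s5 (node (j + 1) (n - 1)) = s4 (node (j + 1) (n - 1)) := by
    apply o5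
    intro h
    have := S.inj hj (by omega) (by omega) h
    omega
  have t5' := t5
  rw [S.sh _ _ hj] at h0 t1 h5 t5'
  rw [x1, p1] at t1
  rw [x4, v4] at h5
  rw [x5, p5] at t5'
  rcases e4 with e4 | e4
  · rw [e4] at h5
    exact absurd t1 h5
  have hy := S.f3 _ _ _ _ _ _ _ _ hj h0 hx t1 h5 t5'
  obtain ⟨s6, r6, o6, t6⟩ := S.last hj s4 s5 hs5 a4 o5 t5 (hy.trans e4)
  refine ⟨s6, S.mono _ _ _ _ (by omega) (S.trans _ _ _ _ _ r14 (S.trans _ _ _ _ _ r5 r6)), ?_, t6⟩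
  intro u hu
  rw [o6 u hu, off5 u hu]

theorem Rall (S : Sys m n node k Val Stab Reach X F) : ∀ j, j < m →
    RR n node Val Stab Reach F j (4 * n * (j + 1)) := by
  intro j
  induction j with
  | zero =>
    intro hm s hs ha _
    obtain ⟨s', r, o, t⟩ := S.base hm s hs ha
    exact ⟨s', S.mono _ _ _ _ (by omega) r, o, t⟩
  | succ j ih =>
    intro hj
    have := S.Rsucc hj (ih (by omega))
    have e : 4 * n * (j + 1) + 4 * n = 4 * n * (j + 1 + 1) := by ring
    rwa [e] at this

theorem Tall (S : Sys m n node k Val Stab Reach X F) : ∀ j, j < m → ∀ s, Val s →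
    ∃ s', Reach (8 * n * (j + 1) ^ 2) s s' ∧ (∀ u, ¬ Dm n node j u → s' u = s u) ∧
      (∀ u, Dm n node j u → Stab s' u) := by
  have n3 := S.n3
  intro j
  induction j with
  | zero =>
    intro hm s hs
    obtain ⟨s1, r1, o1, t1, _⟩ := S.seg hm 0 s hs (n - 1) (by omega) (by intros; omega)
    simp only [Nat.zero_add] at *
    obtain ⟨s2, r2, o2, t2⟩ := S.base hm s1 (S.val _ _ _ hs r1) (by
      rintro u ⟨j', i, h1, h2, rfl⟩ hne
      have : j' = 0 := by omega
      subst this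
      rcases Nat.eq_zero_or_pos i with h0 | h0
      · subst h0; exact absurd rfl hne
      · exact t1 i h0 (by omega))
    refine ⟨s2, S.mono _ _ _ _ (by omega) (S.trans _ _ _ _ _ r1 r2), ?_, t2⟩
    intro u hu
    rw [o2 u hu, o1]
    rintro i h1 h2 rfl
    exact hu (S.Da _ _ (by omega))
  | succ j ih =>
    intro hj s hs
    have hk := S.kk hj
    have hR := S.Rall j (by omega)
    set B := 4 * n * (j + 1) with hB
    set T := 8 * n * (j + 1) ^ 2 with hT
    have hbound : T + 2 * B + 7 * n ≤ 8 * n * (j + 1 + 1) ^ 2 := by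
      rw [hT, hB]; nlinarith
    have nv : ∀ i, 0 < i → i < n → node (j + 1) i ≠ node (j + 1) 0 := by
      intro i hi hi' h
      have := S.inj hj hi' (by omega) h
      omega
    obtain ⟨q1, r1, o1, t1⟩ := ih (by omega) s hs
    have w1 := S.val _ _ _ hs r1
    obtain ⟨q2, r2, o2, t2, _⟩ := S.seg2 hj q1 w1
    have w2 := S.val _ _ _ w1 r2
    obtain ⟨q3, r3, o3, t3, _⟩ := S.single q2 (node (j + 1) 0) w2
    have w3 := S.val _ _ _ w2 r3
    obtain ⟨q4, r4, o4, t4, _⟩ := S.seg1 hj q3 w3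
    have w4 := S.val _ _ _ w3 r4
    have r14 := S.trans _ _ _ _ _ r1 (S.trans _ _ _ _ _ r2 (S.trans _ _ _ _ _ r3 r4))
    have off4 : ∀ u, ¬ Dm n node (j + 1) u → q4 u = s u := by
      intro u hu
      rw [o4, o3, o2, o1]
      · exact fun h => hu (Dsucc h)
      · rintro i h1 h2 rfl
        exact hu (S.Da _ _ (by omega))
      · rintro rfl
        exact hu (S.Da _ _ (by omega))
      · rintro i h1 h2 rfl
        exact hu (S.Da _ _ (by omega))
    have offs3 : ∀ u, ¬ Dm n node (j + 1) u → q4 u = q3 u := by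
      intro u hu
      apply o4
      rintro i h1 h2 rfl
      exact hu (S.Da _ _ (by omega))
    have c41 : ∀ u, Dm n node j u → q4 u = q1 u := by
      intro u hu
      rw [o4, o3, o2]
      · rintro i h1 h2 rfl
        exact S.notD hj (by omega) (by omega) hu
      · rintro rfl
        exact S.notD hj (by omega) (by omega) hu
      · rintro i h1 h2 rfl
        exact S.notD hj (by omega) (by omega) hu
    have c43 : ∀ i, k j ≤ i → i < n → q4 (node (j + 1) i) = q3 (node (j + 1) i) := by
      intro i hi hi'
      apply o4
      intro i' h3 h4 h
      have := S.inj hj hi' (by omega) h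
      omega
    have v43 : q4 (node (j + 1) 0) = q3 (node (j + 1) 0) := by
      apply o4
      intro i' h3 h4 h
      exact nv _ h3 (by omega) h.symm
    have st4 : Stab q4 (node (j + 1) 0) := by
      rw [S.sh _ _ hj] at t3 ⊢
      rw [v43, c43 _ (by omega) (by omega), S.Xloc hj offs3]
      exact t3
    have hal : Al n node Stab j q4 := fun u hu hne =>
      S.loc (by omega) c41 u hu hne (t1 u hu)
    have hx : F j (q4 (node j (n - 1))) (X j q1) (q4 (node j 0)) := by
      have := t1 _ (S.Da j 0 (by omega))
      rw [S.sh j _ (by omega)] at this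
      rw [c41 _ (S.Da j 0 (by omega)), c41 _ (S.Da j (n - 1) (by omega))]
      exact this
    obtain ⟨q5, r5, o5, v5, a5, e5⟩ := S.half' hj hR q4 w4 hal ⟨_, hx⟩ (by
      intro i hi0 hi hik
      by_cases hlt : i < k j
      · exact t4 i hi0 hlt
      · have h6 := t2 i (by omega) hi
        refine S.regloc hj hi0 hi hik ?_ ?_ h6
        · rw [c43 _ (by omega) hi, o3 _ (nv _ hi0 hi)]
        · rw [c43 _ (by omega) (by omega), o3 _ (nv _ (by omega) (by omega))])
    have w5 := S.val _ _ _ w4 r5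
    have r15 := S.trans _ _ _ _ _ r14 r5
    have off5 : ∀ u, ¬ Dm n node (j + 1) u → q5 u = s u := by
      intro u hu
      rw [o5 u hu, off4 u hu]
    by_cases h5 : Stab q5 (node (j + 1) 0)
    · exact ⟨q5, S.mono _ _ _ _ (by omega) r15, off5, S.full a5 h5⟩
    obtain ⟨q6, r6, o6, t6, _⟩ := S.single q5 (node (j + 1) 0) w5
    have w6 := S.val _ _ _ w5 r6
    have off6 : ∀ u, ¬ Dm n node (j + 1) u → q6 u = s u := by
      intro u hu
      rw [o6, off5 u hu]
      rintro rfl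
      exact hu (S.Da _ _ (by omega))
    have g4 := st4
    have g5 := h5
    have g6 := t6
    rw [S.sh _ _ hj] at g4 g5 g6
    rw [S.Xloc hj off4] at g4
    rw [S.Xloc hj off5, v5] at g5
    rw [S.Xloc hj off6, o6 _ (nv (n - 1) (by omega) (by omega))] at g6
    rcases e5 with e5 | e5
    · rw [e5] at g5
      exact absurd g4 g5
    by_cases hy : q6 (node (j + 1) 0) = q5 (node (j + 1) (n - 1))
    · obtain ⟨q7, r7, o7, t7⟩ := S.last hj q5 q6 w6 a5 o6 t6 (hy.trans e5)
      refine ⟨q7, S.mono _ _ _ _ (by omega)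
        (S.trans _ _ _ _ _ r15 (S.trans _ _ _ _ _ r6 r7)), ?_, t7⟩
      intro u hu
      rw [o7 u hu, off6 u hu]
    obtain ⟨q7, r7, o7, v7, a7, e7⟩ := S.half hj hR q5 q6 w6 a5 o6
    have w7 := S.val _ _ _ w6 r7
    have off7 : ∀ u, ¬ Dm n node (j + 1) u → q7 u = s u := by
      intro u hu
      rw [o7 u hu, off6 u hu]
    have r17 := S.trans _ _ _ _ _ r15 (S.trans _ _ _ _ _ r6 r7)
    by_cases h7 : Stab q7 (node (j + 1) 0)
    · exact ⟨q7, S.mono _ _ _ _ (by omega) r17, off7, S.full a7 h7⟩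
    obtain ⟨q8, r8, o8, t8, _⟩ := S.single q7 (node (j + 1) 0) w7
    have w8 := S.val _ _ _ w7 r8
    have off8 : ∀ u, ¬ Dm n node (j + 1) u → q8 u = s u := by
      intro u hu
      rw [o8, off7 u hu]
      rintro rfl
      exact hu (S.Da _ _ (by omega))
    have g7 := h7
    have g8 := t8
    rw [S.sh _ _ hj] at g7 g8
    rw [S.Xloc hj off7, v7] at g7
    rw [S.Xloc hj off8, o8 _ (nv (n - 1) (by omega) (by omega))] at g8
    rcases e7 with e7 | e7
    · rw [e7] at g7
      exact absurd g6 g7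
    have hy' := S.f4 _ _ _ _ _ _ _ _ hj g4 g5 g6 hy g7 g8
    obtain ⟨q9, r9, o9, t9⟩ := S.last hj q7 q8 w8 a7 o8 t8 (hy'.trans e7)
    refine ⟨q9, S.mono _ _ _ _ (by omega)
      (S.trans _ _ _ _ _ r17 (S.trans _ _ _ _ _ r8 r9)), ?_, t9⟩
    intro u hu
    rw [o9 u hu, off8 u hu]

end Sys

/-- No profitable unilateral deviation at `u`. -/
def Stb {V M : Type} [Fintype V] (adj : V → V → Prop) (w : V → V → ℝ) (C : V → Finset M)
    (s : V → M) (u : V) : Prop :=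
  ∀ c ∈ C u, payoff adj w (fun _ _ => 0) (Function.update s u c) u ≤
    if s u ∈ C u then payoff adj w (fun _ _ => 0) s u else 0

/-- Reachable in at most `B` steps. -/
def Rch {V M : Type} [Fintype V] (adj : V → V → Prop) (w : V → V → ℝ) (C : V → Finset M)
    (B : ℕ) (s s' : V → M) : Prop :=
  ∃ L, L ≤ B ∧ ∃ σ : ℕ → V → M, σ 0 = s ∧
    (∀ t, t < L → UniDev adj w (fun _ _ => 0) C (σ t) (σ (t + 1))) ∧ σ L = s'

section
variable {V M : Type} [Fintype V] {adj : V → V → Prop} {w : V → V → ℝ} {C : V → Finset M}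

theorem rch_trans (a b : ℕ) (s s' s'' : V → M) (h1 : Rch adj w C a s s')
    (h2 : Rch adj w C b s' s'') : Rch adj w C (a + b) s s'' := by
  obtain ⟨L, hL, σ, h0, hs, he⟩ := h1
  obtain ⟨L', hL', σ', h0', hs', he'⟩ := h2
  refine ⟨L + L', by omega, fun t => if t ≤ L then σ t else σ' (t - L), by simp [h0], ?_, ?_⟩
  · intro t ht
    by_cases h : t < L
    · have h1 : t ≤ L := by omega
      have h2 : t + 1 ≤ L := by omega
      simp only [h1, h2, if_true]
      exact hs t h
    · have h2 : ¬ t + 1 ≤ L := by omega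
      simp only [h2, if_false]
      have := hs' (t - L) (by omega)
      have e : t - L + 1 = t + 1 - L := by omega
      rw [e] at this
      by_cases h1 : t ≤ L
      · have h3 : t = L := by omega
        subst h3
        simp only [le_refl, if_true]
        rw [he, ← h0']
        simpa using this
      · simp only [h1, if_false]
        exact this
  · by_cases h : L' = 0
    · subst h
      simp [he, ← he', h0']
    · have : ¬ L + L' ≤ L := by omega
      simp only [this, if_false]
      rw [← he']
      congr 1
      omega

theorem rch_val (a : ℕ) (s s' : V → M) (hv : Valid C s) (h1 : Rch adj w C a s s') :
    Valid C s' := by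
  obtain ⟨L, hL, σ, h0, hs, he⟩ := h1
  rcases L with _ | L
  · rw [← he, h0]; exact hv
  · rw [← he]
    exact (hs L (by omega)).1.1

theorem rch_single (hadj : ∀ u, (C u).Nonempty) (s : V → M) (u : V) (hv : Valid C s) :
    ∃ s', Rch adj w C 1 s s' ∧ (∀ x, x ≠ u → s' x = s x) ∧ Stb adj w C s' u ∧
    (Stb adj w C s u → s' = s) := by
  by_cases h : Stb adj w C s u
  · exact ⟨s, ⟨0, by omega, fun _ => s, rfl, by intro t ht; omega, rfl⟩, fun _ _ => rfl, h,
      fun _ => rfl⟩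
  obtain ⟨c, hc, hmax⟩ := Finset.exists_max_image (C u)
    (fun c => payoff adj w (fun _ _ => 0) (Function.update s u c) u) (hadj u)
  have hlt : payoff adj w (fun _ _ => 0) s u <
      payoff adj w (fun _ _ => 0) (Function.update s u c) u := by
    unfold Stb at h
    rw [if_pos (hv u)] at h
    push Not at h
    obtain ⟨d, hd, hlt⟩ := h
    exact lt_of_lt_of_le hlt (hmax d hd)
  refine ⟨Function.update s u c, ⟨1, le_rfl, fun t => if t = 0 then s else Function.update s u c,
    by simp, ?_, by simp⟩, ?_, ?_, fun h' => absurd h' h⟩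
  · intro t ht
    have : t = 0 := by omega
    subst this
    simp only [if_true, Nat.zero_add, one_ne_zero, if_false]
    refine ⟨⟨?_, ?_, ?_⟩, u, ?_⟩
    · intro i
      by_cases hi : i = u
      · subst hi; simpa using hc
      · simpa [hi] using hv i
    · intro he
      rw [← he] at hlt
      exact lt_irrefl _ hlt
    · intro i hi
      by_cases hiu : i = u
      · subst hiu; exact hlt
      · simp [hiu] at hi
    · intro i hi
      simp [hi]
  · intro x hx
    simp [hx]
  · intro d hd
    simpa [hc] using hmax d hd

theorem nash_of_stb (s : V → M) (hv : Valid C s) (h : ∀ u, Stb adj w C s u) :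
    IsNash adj w (fun _ _ => 0) C s := by
  refine ⟨hv, ?_⟩
  rintro s' ⟨⟨h1, h2, h3⟩, u, h4⟩
  have he : s' = Function.update s u (s' u) := by
    funext x
    by_cases hx : x = u
    · subst hx; simp
    · simp [hx, h4 x hx]
  have hne : s u ≠ s' u := by
    intro hh
    apply h2
    funext x
    by_cases hx : x = u
    · subst hx; exact hh
    · exact h4 x hx
  have := h u (s' u) (h1 u)
  rw [← he, if_pos (hv u)] at this
  exact absurd (h3 u hne) (not_lt.mpr this)

theorem stb_one {u p : V} (hp : p ≠ u) (ha : ∀ x, adj x u ↔ x = p) (hw : 0 ≤ w p u)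
    (s : V → M) :
    Stb adj w C s u ↔ (s p ∈ {c | c ∈ C u ∧ 0 < w p u} → s u = s p) := by
  have hpay : ∀ s : V → M, payoff adj w (fun _ _ => 0) s u = if s p = s u then w p u else 0 := by
    intro s
    unfold payoff
    have : (Finset.univ.filter (fun x => adj x u ∧ s x = s u)) =
        ({p} : Finset V).filter (fun x => s x = s u) := by
      ext x
      simp [ha]
    rw [this, Finset.sum_filter, Finset.sum_singleton]
    simp
  unfold Stb
  simp only [hpay, Function.update_of_ne hp, Function.update_self, Set.mem_ofPred_eq]
  constructor
  · rintro h ⟨h1, h2⟩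
    have h3 := h _ h1
    by_contra hne
    have hne' : s p ≠ s u := fun h => hne h.symm
    simp only [if_true, hne', if_false, ite_self] at h3
    linarith
  · intro h c hc
    by_cases h1 : s p = c
    · rcases hw.lt_or_eq with h6 | h6
      · have h7 := h ⟨h1 ▸ hc, h6⟩
        rw [h7, h1]
        simp [hc]
      · simp [← h6]
    · rw [if_neg h1]
      split_ifs <;> linarith

theorem stb_two {u f g : V} (hf : f ≠ u) (hg : g ≠ u) (hfg : f ≠ g)
    (ha : ∀ x, adj x u ↔ (x = f ∨ x = g)) (hw : 0 ≤ w g u) (hlt : w g u < w f u)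
    (s : V → M) :
    Stb adj w C s u ↔ ((s f ∈ {c | c ∈ C u} → s u = s f) ∧
      (s f ∉ {c | c ∈ C u} → s g ∈ {c | c ∈ C u ∧ 0 < w g u} → s u = s g)) := by
  have hpay : ∀ s : V → M, payoff adj w (fun _ _ => 0) s u =
      (if s f = s u then w f u else 0) + (if s g = s u then w g u else 0) := by
    intro s
    unfold payoff
    have : (Finset.univ.filter (fun x => adj x u ∧ s x = s u)) =
        ({f, g} : Finset V).filter (fun x => s x = s u) := by
      ext x
      simp [ha]
    rw [this, Finset.sum_filter, Finset.sum_pair hfg]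
    simp
  unfold Stb
  simp only [hpay, Function.update_of_ne hf, Function.update_of_ne hg, Function.update_self,
    Set.mem_ofPred_eq]
  constructor
  · intro h
    constructor
    · intro h1
      have h3 := h _ h1
      by_contra hne
      have hne' : s f ≠ s u := fun h => hne h.symm
      simp only [if_true, hne', if_false] at h3
      split_ifs at h3 <;> linarith
    · rintro h1 ⟨h2, h3⟩
      have h4 := h _ h2
      by_contra hne
      have hne' : s g ≠ s u := fun h => hne h.symm
      have hfg' : s f ≠ s g := fun h => h1 (h ▸ h2)
      simp only [if_true, hne', hfg', if_false] at h4
      split_ifs at h4 with h5 h6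
      · exact h1 (h6 ▸ h5)
      · linarith
      · linarith
  · rintro ⟨h1, h2⟩ c hc
    by_cases h3 : s f ∈ C u
    · have := h1 h3
      rw [this, if_pos h3]
      by_cases h4 : s f = c
      · rw [← h4]
      · rw [if_neg h4, if_pos rfl]
        split_ifs <;> linarith
    · have h4 : s f ≠ c := by rintro rfl; exact h3 hc
      rw [if_neg h4]
      by_cases h5 : s g = c
      · rcases hw.lt_or_eq with h6 | h6
        · have := h2 h3 ⟨h5 ▸ hc, h6⟩
          rw [this, h5, if_pos hc]
          split_ifs <;> linarith
        · rw [← h6]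
          split_ifs <;> linarith
      · rw [if_neg h5]
        split_ifs <;> linarith

end

/-- Two-level preference rule. -/
def Rule {M : Type} (B1 B2 : Set M) (f g c : M) : Prop :=
  (f ∈ B1 → c = f) ∧ (f ∉ B1 → g ∈ B2 → c = g)

section
variable {V : Type} {m n : ℕ} {node : ℕ → ℕ → V} {k : ℕ → ℕ}

theorem adj_reg (h : IsOpenChain m n node k) {j i : ℕ} (hj : j < m) (h0 : 0 < i) (hi : i < n)
    (hk : ∀ j', j = j' + 1 → i ≠ k j') (x : V) :
    chainAdj m n node x (node j i) ↔ x = node j (i - 1) := by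
  obtain ⟨_, h2, _, _, h5, _⟩ := h
  constructor
  · rintro ⟨j', i', h6, h7, rfl, h9⟩
    have hlt : (i' + 1) % n < n := Nat.mod_lt _ (by omega)
    rcases h5 j i j' _ hj hi h6 hlt h9 with ⟨rfl, hb⟩ | ⟨ha, hb, hc⟩ | ⟨ha, hb, hc⟩
    · by_cases he : i' + 1 = n
      · rw [he, Nat.mod_self] at hb; omega
      · rw [Nat.mod_eq_of_lt (by omega)] at hb
        rw [hb]; rfl
    · omega
    · exact absurd hc (hk j' ha)
  · rintro rfl
    refine ⟨j, i - 1, hj, by omega, rfl, ?_⟩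
    rw [Nat.mod_eq_of_lt (by omega)]
    congr 1
    omega

theorem adj_last (h : IsOpenChain m n node k) {j : ℕ} (hj : j + 1 = m) (x : V) :
    chainAdj m n node x (node j 0) ↔ x = node j (n - 1) := by
  obtain ⟨_, h2, hk, _, h5, _⟩ := h
  constructor
  · rintro ⟨j', i', h6, h7, rfl, h9⟩
    have hlt : (i' + 1) % n < n := Nat.mod_lt _ (by omega)
    rcases h5 j 0 j' _ (by omega) (by omega) h6 hlt h9 with ⟨rfl, hb⟩ | ⟨ha, hb, hc⟩ | ⟨ha, hb, hc⟩
    · by_cases he : i' + 1 = n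
      · rw [← he]; rfl
      · rw [Nat.mod_eq_of_lt (by omega)] at hb
        omega
    · omega
    · have := hk j' (by omega)
      omega
  · rintro rfl
    refine ⟨j, n - 1, by omega, by omega, rfl, ?_⟩
    rw [Nat.sub_add_cancel (by omega), Nat.mod_self]

theorem adj_sh (h : IsOpenChain m n node k) {j : ℕ} (hj : j + 1 < m) (x : V) :
    chainAdj m n node x (node j 0) ↔ (x = node j (n - 1) ∨ x = node (j + 1) (k j - 1)) := by
  obtain ⟨_, h2, hk, hg, h5, _⟩ := h
  have hkj := hk j hj
  constructor
  · rintro ⟨j', i', h6, h7, rfl, h9⟩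
    have hlt : (i' + 1) % n < n := Nat.mod_lt _ (by omega)
    rcases h5 j 0 j' _ (by omega) (by omega) h6 hlt h9 with ⟨rfl, hb⟩ | ⟨ha, hb, hc⟩ | ⟨ha, hb, hc⟩
    · by_cases he : i' + 1 = n
      · left; rw [← he]; rfl
      · rw [Nat.mod_eq_of_lt (by omega)] at hb
        omega
    · right
      subst ha
      by_cases he : i' + 1 = n
      · rw [he, Nat.mod_self] at hc; omega
      · rw [Nat.mod_eq_of_lt (by omega)] at hc
        rw [← hc]; rfl
    · have := hk j' (by omega)
      omega
  · rintro (rfl | rfl)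
    · refine ⟨j, n - 1, by omega, by omega, rfl, ?_⟩
      rw [Nat.sub_add_cancel (by omega), Nat.mod_self]
    · refine ⟨j + 1, k j - 1, hj, by omega, rfl, ?_⟩
      rw [hg j hj, Nat.sub_add_cancel (by omega), Nat.mod_eq_of_lt (by omega)]

end

theorem rules {V : Type} [Fintype V] {M : Type} {m n : ℕ} {node : ℕ → ℕ → V} {k : ℕ → ℕ}
    (h : IsOpenChain m n node k) (w : V → V → ℝ) (hw : ∀ u v, chainAdj m n node u v → 0 ≤ w u v)
    (hd : ∀ j, j + 1 < m →
          w (node j (n - 1)) (node j 0) ≠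
            w (node (j + 1) (k j - 1)) (node (j + 1) (k j)))
    (C : V → Finset M) (X : ℕ → (V → M) → M)
    (hX : ∀ j s, j + 1 < m → X j s = s (node (j + 1) (k j - 1))) (j : ℕ) (hj : j < m) :
    ∃ B1 B2 : Set M,
      (∀ s, Stb (chainAdj m n node) w C s (node j 0) ↔
        Rule B1 B2 (s (node j (n - 1))) (X j s) (s (node j 0))) ∨
      (∀ s, Stb (chainAdj m n node) w C s (node j 0) ↔
        Rule B1 B2 (X j s) (s (node j (n - 1))) (s (node j 0))) := by
  have h' := h
  obtain ⟨_, h2, hk, hg, h5, _⟩ := h'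
  have hP : node j (n - 1) ≠ node j 0 := by
    intro he
    rcases h5 _ _ _ _ hj (by omega) hj (by omega) he with h | h | h <;> omega
  by_cases hj' : j + 1 < m
  · have hkj := hk j hj'
    have ha := adj_sh h hj'
    have hE : node (j + 1) (k j - 1) ≠ node j 0 := by
      rw [hg j hj']
      intro he
      rcases h5 _ _ _ _ hj' (by omega) hj' (by omega) he with h | h | h <;> omega
    have hPE : node j (n - 1) ≠ node (j + 1) (k j - 1) := by
      intro he
      rcases h5 _ _ _ _ hj (by omega) hj' (by omega) he with h | h | h <;> omega
    have hd' := hd j hj'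
    rw [← hg j hj'] at hd'
    have w1 := hw _ _ ((ha _).2 (Or.inl rfl))
    have w2 := hw _ _ ((ha _).2 (Or.inr rfl))
    rcases lt_or_gt_of_ne hd' with hl | hl
    · refine ⟨{c | c ∈ C (node j 0)}, {c | c ∈ C (node j 0) ∧ 0 < w (node j (n - 1)) (node j 0)},
        Or.inr fun s => ?_⟩
      rw [hX _ _ hj']
      exact stb_two hE hP hPE.symm (fun x => (ha x).trans or_comm) w1 hl s
    · refine ⟨{c | c ∈ C (node j 0)}, {c | c ∈ C (node j 0) ∧ 0 < w (node (j + 1) (k j - 1)) (node j 0)},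
        Or.inl fun s => ?_⟩
      rw [hX _ _ hj']
      exact stb_two hP hE hPE ha w2 hl s
  · have ha := adj_last h (show j + 1 = m by omega)
    refine ⟨{c | c ∈ C (node j 0) ∧ 0 < w (node j (n - 1)) (node j 0)}, ∅, Or.inl fun s => ?_⟩
    rw [stb_one hP ha (hw _ _ ((ha _).2 rfl)) s]
    simp only [Rule, Set.mem_empty_iff_false, false_imp_iff, imp_true_iff, and_true]

theorem mkSys {V : Type} [Fintype V] {M : Type} {m n : ℕ} {node : ℕ → ℕ → V} {k : ℕ → ℕ}
    (h : IsOpenChain m n node k) (w : V → V → ℝ) (hw : ∀ u v, chainAdj m n node u v → 0 ≤ w u v)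
    (hd : ∀ j, j + 1 < m →
          w (node j (n - 1)) (node j 0) ≠
            w (node (j + 1) (k j - 1)) (node (j + 1) (k j)))
    (C : V → Finset M) (hC : ∀ i, (C i).Nonempty) (c0 : M) :
    ∃ X F, Sys m n node k (Valid C) (Stb (chainAdj m n node) w C) (Rch (chainAdj m n node) w C)
      X F := by
  let X : ℕ → (V → M) → M := fun j s => if j + 1 < m then s (node (j + 1) (k j - 1)) else c0
  have hX : ∀ j s, j + 1 < m → X j s = s (node (j + 1) (k j - 1)) := by
    intro j s hj
    simp only [X, hj, if_true]
  have hr := rules h w hw hd C X hX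
  choose! B1 B2 hB using hr
  let F : ℕ → M → M → M → Prop := fun j p x c =>
    if (∀ s, Stb (chainAdj m n node) w C s (node j 0) ↔
        Rule (B1 j) (B2 j) (s (node j (n - 1))) (X j s) (s (node j 0))) then
      Rule (B1 j) (B2 j) p x c else Rule (B1 j) (B2 j) x p c
  have hF : ∀ j, F j = (fun p x c => Rule (B1 j) (B2 j) p x c) ∨
      F j = (fun p x c => Rule (B1 j) (B2 j) x p c) := by
    intro j
    by_cases hh : (∀ s, Stb (chainAdj m n node) w C s (node j 0) ↔
        Rule (B1 j) (B2 j) (s (node j (n - 1))) (X j s) (s (node j 0)))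
    · left; funext p x c; simp only [F]; rw [if_pos hh]
    · right; funext p x c; simp only [F]; rw [if_neg hh]
  refine ⟨X, F, ?_⟩
  have h' := h
  obtain ⟨_, h2, hk, hg, h5, _⟩ := h'
  constructor
  · exact h
  · intro s
    exact ⟨0, le_rfl, fun _ => s, rfl, by intro t ht; omega, rfl⟩
  · exact rch_trans
  · rintro a b s s' hab ⟨L, hL, hr⟩
    exact ⟨L, by omega, hr⟩
  · exact rch_val
  · exact rch_single hC
  · intro j i hj h0 hi hik
    have ha := adj_reg h hj h0 hi hik
    refine ⟨_, fun s => stb_one ?_ ha (hw _ _ ((ha _).2 rfl)) s⟩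
    intro he
    rcases h5 _ _ _ _ hj (by omega) hj (by omega) he with h | h | h <;> omega
  · intro j s hj
    by_cases hh : (∀ s, Stb (chainAdj m n node) w C s (node j 0) ↔
        Rule (B1 j) (B2 j) (s (node j (n - 1))) (X j s) (s (node j 0)))
    · simp only [F]
      rw [if_pos hh]
      exact hh s
    · simp only [F]
      rw [if_neg hh]
      exact ((hB j hj).resolve_left hh) s
  · exact hX
  · intro j s s' hj
    have : ¬ j + 1 < m := by omega
    simp only [X, this, if_false]
  · intro j p x c _
    rcases hF j with e | e <;> rw [e] <;> simp only [Rule] <;> grind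
  · intro j p x c _
    rcases hF j with e | e <;> rw [e] <;> simp only [Rule] <;> grind
  · intro j p x x0 c0 t1 y t2 _
    rcases hF j with e | e <;> rw [e] <;> simp only [Rule] <;> grind
  · intro j p x t0 y t1 y' t2 _
    rcases hF j with e | e <;> rw [e] <;> simp only [Rule] <;> grind

/-- There is a constant `c` such that every coordination game without bonuses
on a weighted open chain of `m` cycles, each cycle having `n` nodes, in which
the two weights entering each shared node are distinct, admits, from every
joint strategy, a finite improvement path of length at most `c * n * m ^ 3`
ending in a Nash equilibrium. -/
theorem weighted_open_chain_improvement_path :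
    ∃ c : ℕ,
      ∀ (V : Type) [Fintype V] (M : Type) [Fintype M],
      ∀ (m n : ℕ) (node : ℕ → ℕ → V) (k : ℕ → ℕ),
        IsOpenChain m n node k →
      ∀ (w : V → V → ℝ), (∀ u v, chainAdj m n node u v → 0 ≤ w u v) →
        (∀ j, j + 1 < m →
          w (node j (n - 1)) (node j 0) ≠
            w (node (j + 1) (k j - 1)) (node (j + 1) (k j))) →
      ∀ (C : V → Finset M), (∀ i, (C i).Nonempty) →
      ∀ s : V → M, Valid C s →
        ∃ L, L ≤ c * n * m ^ 3 ∧
          ImpPath (chainAdj m n node) w (fun _ _ => 0) C s L := by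
  refine ⟨8, ?_⟩
  intro V _ M _ m n node k h w hw hd C hC s hs
  obtain ⟨X, F, S⟩ := mkSys h w hw hd C hC (s (node 0 0))
  obtain ⟨hm, _, _, _, _, hcov⟩ := h
  obtain ⟨s', ⟨L, hL, σ, h0, hst, he⟩, _, t⟩ := S.Tall (m - 1) (by omega) s hs
  have hv : Valid C s' := rch_val _ s s' hs ⟨L, hL, σ, h0, hst, he⟩
  rw [Nat.sub_add_cancel (by omega)] at hL
  refine ⟨L, hL.trans (Nat.mul_le_mul_left _ (Nat.pow_le_pow_right (by omega) (by omega))),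
    σ, h0, hst, ?_⟩
  rw [he]
  refine nash_of_stb s' hv fun u => t u ?_
  obtain ⟨j, i, hj, hi, rfl⟩ := hcov u
  exact ⟨j, i, by omega, hi, rfl⟩

end CG
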